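/- arXiv:0812.0997 — 3 statements merged into one kernel-verified Lean document; each statement's English description precedes it below -/
import Mathlib

section
/- Bracket generating property of the double forced periodic system: Assume Φ is admissible. Let gⁿ denote the constant vector field ∂/∂pₙ, and let L be the smallest set of smooth vector fields on ℝ^{2n} that contains f, g and gⁿ and is closed under Lie brackets. Then for every x ∈ ℝ^{2n}, the linear span of {X(x) : X ∈ L} equals ℝ^{2n}; i.e. the family {f, g, gⁿ} is bracket generating at every point of ℝ^{2n}. -/
/-!
Fix a point `x` and let `𝓜` be the module, over germs at `x` of smooth functions, generated by the
iterated brackets of `f`, `∂/∂p₁`, `∂/∂pₙ`. By the Leibniz rule `𝓜` is closed under Lie brackets,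
and its elements take values at `x` in the span in question, so it is enough to put every constant
coordinate field into `𝓜`.

If `∂/∂p_j ∈ 𝓜`, then `[f, ∂/∂p_j] = -∂/∂q_j ∈ 𝓜`. Modulo `∂/∂p_{j-1}` and `∂/∂p_j`, the bracket
`[f, ∂/∂q_j]` is `-Φ''(q_j - q_{j+1}) ∂/∂p_{j+1}`. Hence if `∂/∂p_{j-1}, ∂/∂p_j ∈ 𝓜`, then
`Φ''(q_j - q_{j+1}) ∂/∂p_{j+1} ∈ 𝓜`, and repeated brackets with `∂/∂q_j` replace `Φ''` by any of its
derivatives. An admissible `Φ` is analytic and not affine, so one of these coefficients is nonzero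
at `x`; dividing by it near `x` gives `∂/∂p_{j+1} ∈ 𝓜`. Induction from the pair `∂/∂pₙ, ∂/∂p₁` goes
once around the cycle.
-/

open scoped BigOperators
open MeasureTheory Filter Set

noncomputable section

/-- The state space ℝ^{2n}, with coordinates (q,p). -/
abbrev State (n : ℕ) := (Fin n → ℝ) × (Fin n → ℝ)

/-- The drift vector field of the periodic multiparticle system,
`f(q,p) = Σ p_k ∂/∂q_k + Σ (φ(q_{k-1}-q_k) - φ(q_k-q_{k+1})) ∂/∂p_k` with `φ = Φ'`,
with cyclic indexing in `Fin n`. -/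
def drift (n : ℕ) [NeZero n] (Φ : ℝ → ℝ) (x : State n) : State n :=
  (x.2, fun k => deriv Φ (x.1 (k - 1) - x.1 k) - deriv Φ (x.1 k - x.1 (k + 1)))

/-- The momentum coordinate vector `e_{p_j} = ∂/∂p_j`. -/
def ep (n : ℕ) [NeZero n] (j : Fin n) : State n := (0, Pi.single j 1)

/-- The position coordinate vector `e_{q_j} = ∂/∂q_j`. -/
def eq' (n : ℕ) [NeZero n] (j : Fin n) : State n := (Pi.single j 1, 0)

/-- `Φ` is admissible: real analytic, bounded below, and `Φ(y) → +∞` as `y → +∞`. -/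
def Admissible (Φ : ℝ → ℝ) : Prop :=
  (∀ x, AnalyticAt ℝ Φ x) ∧ BddBelow (Set.range Φ) ∧ Tendsto Φ atTop atTop

/-- `Φ` is generic: for no `b` is `Φ''` even or odd about `b`. -/
def Generic (Φ : ℝ → ℝ) : Prop :=
  ∀ b : ℝ,
    (¬ ∀ t : ℝ, deriv (deriv Φ) (b + t) = deriv (deriv Φ) (b - t)) ∧
    (¬ ∀ t : ℝ, deriv (deriv Φ) (b + t) = - deriv (deriv Φ) (b - t))

/-- Lie bracket of vector fields: `[X,Y](x) = DY(x)·X(x) − DX(x)·Y(x)`. -/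
def lieBracket {n : ℕ} (X Y : State n → State n) : State n → State n :=
  fun x => fderiv ℝ Y x (X x) - fderiv ℝ X x (Y x)

/-- Admissible trajectory of the single forced system `ẋ = f(x) + u(t) g`
(in absolutely-continuous/integral form). -/
def IsTrajectory (n : ℕ) [NeZero n] (Φ : ℝ → ℝ) (θ : ℝ) (u : ℝ → ℝ)
    (x : ℝ → State n) : Prop :=
  ContinuousOn x (Set.Icc 0 θ) ∧
  ∀ t ∈ Set.Icc 0 θ,
    x t = x 0 + ∫ s in (0:ℝ)..t, (drift n Φ (x s) + u s • ep n 0)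

/-- The smallest family of vector fields containing `F` and closed under Lie brackets. -/
inductive LieGen (n : ℕ) (F : Set (State n → State n)) : (State n → State n) → Prop
  | base (X : State n → State n) (hX : X ∈ F) : LieGen n F X
  | bracket (X Y : State n → State n) (hX : LieGen n F X) (hY : LieGen n F Y) :
      LieGen n F (lieBracket X Y)

open scoped ContDiff Topology

section GermSpan

variable {𝕜 E : Type*} [NontriviallyNormedField 𝕜] [NormedAddCommGroup E] [NormedSpace 𝕜 E]

variable (𝕜) in
/-- A family of smooth vector fields closed under Lie brackets, such as the iterated brackets of
given smooth fields; no linear structure is required. -/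
structure IsSmoothBracketClosed (S : Set (E → E)) : Prop where
  contDiff : ∀ X ∈ S, ContDiff 𝕜 ∞ X
  lieBracket_mem : ∀ X ∈ S, ∀ Y ∈ S, VectorField.lieBracket 𝕜 X Y ∈ S

variable (𝕜) in
/-- The module `𝓜` generated by `S` over the germs at `x` of smooth functions. Its elements are
encoded as total vector fields; the constructor `congr` makes membership a property of the germ. -/
inductive GermSpan (S : Set (E → E)) (x : E) : (E → E) → Prop
  | of_mem {X : E → E} (hX : X ∈ S) : GermSpan S x X
  | add {X Y : E → E} (hX : GermSpan S x X) (hY : GermSpan S x Y) : GermSpan S x (X + Y)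
  | smul {a : E → 𝕜} {X : E → E} (ha : ContDiffAt 𝕜 ∞ a x) (hX : GermSpan S x X) :
      GermSpan S x (fun y => a y • X y)
  | congr {X Y : E → E} (hX : GermSpan S x X) (hXY : X =ᶠ[𝓝 x] Y) : GermSpan S x Y

lemma eventually_differentiableAt_of_contDiffAt {F : Type*} [NormedAddCommGroup F]
    [NormedSpace 𝕜 F] {m : ℕ∞ω} {f : E → F} {x : E} (hf : ContDiffAt 𝕜 m f x) (hm : 1 ≤ m) :
    ∀ᶠ y in 𝓝 x, DifferentiableAt 𝕜 f y :=
  ((hf.of_le hm).eventually (by simp)).mono fun _ hy => hy.differentiableAt one_ne_zero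

namespace GermSpan

variable {S : Set (E → E)} {x : E} {X Y : E → E}

lemma neg (hX : GermSpan 𝕜 S x X) : GermSpan 𝕜 S x (-X) :=
  (hX.smul (contDiffAt_const (c := (-1 : 𝕜)))).congr (.of_forall fun y => by simp)

lemma of_smul {a : E → 𝕜} (ha : ContDiffAt 𝕜 ∞ a x) (hax : a x ≠ 0)
    (h : GermSpan 𝕜 S x (fun y => a y • X y)) : GermSpan 𝕜 S x X := by
  refine (h.smul (ha.inv hax)).congr ?_
  filter_upwards [ha.continuousAt.eventually_ne hax] with y hy
  simp [smul_smul, hy]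

lemma apply_mem_span (hX : GermSpan 𝕜 S x X) :
    X x ∈ Submodule.span 𝕜 ((fun Y => Y x) '' S) := by
  induction hX with
  | of_mem hX => exact Submodule.subset_span ⟨_, hX, rfl⟩
  | add _ _ ihX ihY => exact Submodule.add_mem _ ihX ihY
  | smul _ _ ih => exact Submodule.smul_mem _ _ ih
  | congr _ hXY ih => exact hXY.eq_of_nhds ▸ ih

lemma contDiffAt (hS : ∀ X ∈ S, ContDiff 𝕜 ∞ X) (hX : GermSpan 𝕜 S x X) :
    ContDiffAt 𝕜 ∞ X x := by
  induction hX with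
  | of_mem hX => exact (hS _ hX).contDiffAt
  | add _ _ ihX ihY => exact ihX.add ihY
  | smul ha _ ih => exact ha.smul ih
  | congr _ hXY ih => exact ih.congr_of_eventuallyEq hXY.symm

lemma eventually_differentiableAt (hS : ∀ X ∈ S, ContDiff 𝕜 ∞ X) (hX : GermSpan 𝕜 S x X) :
    ∀ᶠ y in 𝓝 x, DifferentiableAt 𝕜 X y :=
  eventually_differentiableAt_of_contDiffAt (hX.contDiffAt hS) (by simp)

lemma lieBracket_of_forall_mem (hS : ∀ X ∈ S, ContDiff 𝕜 ∞ X) (hX : ContDiffAt 𝕜 ∞ X x)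
    (hXS : ∀ Y ∈ S, GermSpan 𝕜 S x (VectorField.lieBracket 𝕜 X Y)) (hY : GermSpan 𝕜 S x Y) :
    GermSpan 𝕜 S x (VectorField.lieBracket 𝕜 X Y) := by
  induction hY with
  | of_mem hY => exact hXS _ hY
  | add hY hZ ihY ihZ =>
    refine (ihY.add ihZ).congr ?_
    filter_upwards [hY.eventually_differentiableAt hS, hZ.eventually_differentiableAt hS]
      with y hYy hZy
    exact (VectorField.lieBracket_add_right hYy hZy).symm
  | @smul a Y ha hY ih =>
    have hXa : ContDiffAt 𝕜 ∞ (fun y => fderiv 𝕜 a y (X y)) x :=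
      (ha.fderiv_right (by simp)).clm_apply hX
    refine ((hY.smul hXa).add (ih.smul ha)).congr ?_
    filter_upwards [hY.eventually_differentiableAt hS,
      eventually_differentiableAt_of_contDiffAt ha (by simp)] with y hYy hay
    exact (VectorField.lieBracket_smul_right hay hYy).symm
  | congr _ hYZ ih => exact ih.congr (Filter.EventuallyEq.lieBracket_vectorField .rfl hYZ)

lemma lieBracket_symm (h : GermSpan 𝕜 S x (VectorField.lieBracket 𝕜 X Y)) :
    GermSpan 𝕜 S x (VectorField.lieBracket 𝕜 Y X) :=
  h.neg.congr (.of_forall fun _ => VectorField.lieBracket_swap.symm)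

lemma lieBracket (hS : IsSmoothBracketClosed 𝕜 S) (hX : GermSpan 𝕜 S x X)
    (hY : GermSpan 𝕜 S x Y) : GermSpan 𝕜 S x (VectorField.lieBracket 𝕜 X Y) := by
  refine lieBracket_of_forall_mem hS.contDiff (hX.contDiffAt hS.contDiff) (fun Z hZ => ?_) hY
  refine lieBracket_symm (lieBracket_of_forall_mem hS.contDiff
    (hS.contDiff Z hZ).contDiffAt (fun W hW => ?_) hX)
  exact .of_mem (hS.lieBracket_mem Z hZ W hW)

variable {v w : E}

lemma fderiv_smul_const (hS : IsSmoothBracketClosed 𝕜 S) (hv : GermSpan 𝕜 S x fun _ => v)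
    {a : E → 𝕜} (ha : Differentiable 𝕜 a) (h : GermSpan 𝕜 S x fun y => a y • w) :
    GermSpan 𝕜 S x fun y => fderiv 𝕜 a y v • w := by
  refine (hv.lieBracket hS h).congr (.of_forall fun y => ?_)
  rw [VectorField.lieBracket_smul_right (ha y) (differentiableAt_const w)]
  simp [VectorField.lieBracket]

variable {ℓ : E →L[𝕜] 𝕜} {b : 𝕜 → 𝕜}

lemma iteratedDeriv_comp_smul_const (hS : IsSmoothBracketClosed 𝕜 S)
    (hv : GermSpan 𝕜 S x fun _ => v) (hℓ : ℓ v ≠ 0) (hb : ContDiff 𝕜 ∞ b)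
    (h : GermSpan 𝕜 S x fun y => b (ℓ y) • w) (m : ℕ) :
    GermSpan 𝕜 S x fun y => iteratedDeriv m b (ℓ y) • w := by
  induction m with
  | zero => simpa using h
  | succ m ih =>
    have hd : Differentiable 𝕜 (iteratedDeriv m b) :=
      hb.differentiable_iteratedDeriv m (mod_cast ENat.natCast_lt_top m)
    have hfderiv (y : E) : fderiv 𝕜 (fun z => iteratedDeriv m b (ℓ z)) y v =
        ℓ v * iteratedDeriv (m + 1) b (ℓ y) := by
      have hcomp : HasFDerivAt (fun z => iteratedDeriv m b (ℓ z))
          (deriv (iteratedDeriv m b) (ℓ y) • ℓ) y :=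
        (hd (ℓ y)).hasDerivAt.comp_hasFDerivAt y ℓ.hasFDerivAt
      simp [hcomp.fderiv, iteratedDeriv_succ, mul_comm]
    refine of_smul (contDiffAt_const (c := ℓ v)) hℓ ?_
    simpa only [Function.comp_def, hfderiv, mul_smul] using
      hv.fderiv_smul_const hS (hd.comp ℓ.differentiable) ih

lemma const_of_comp_smul_const (hS : IsSmoothBracketClosed 𝕜 S)
    (hv : GermSpan 𝕜 S x fun _ => v) (hℓ : ℓ v ≠ 0) (hb : ContDiff 𝕜 ∞ b)
    (h : GermSpan 𝕜 S x fun y => b (ℓ y) • w) {m : ℕ} (hm : iteratedDeriv m b (ℓ x) ≠ 0) :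
    GermSpan 𝕜 S x fun _ => w := by
  have hbm : ContDiff 𝕜 ∞ (iteratedDeriv m b) := by
    simpa only [iteratedDeriv_eq_iterate] using hb.iterate_deriv m
  exact of_smul (hbm.comp ℓ.contDiff).contDiffAt hm
    (hv.iteratedDeriv_comp_smul_const hS hℓ hb h m)

end GermSpan

end GermSpan

lemma lieBracket_eq_vectorField_lieBracket {n : ℕ} (X Y : State n → State n) :
    lieBracket X Y = VectorField.lieBracket ℝ X Y := rfl

lemma LieGen.contDiff {n : ℕ} {F : Set (State n → State n)} (hF : ∀ X ∈ F, ContDiff ℝ ∞ X)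
    {X : State n → State n} (hX : LieGen n F X) : ContDiff ℝ ∞ X := by
  induction hX with
  | base X hX => exact hF X hX
  | bracket X Y _ _ ihX ihY =>
    rw [lieBracket_eq_vectorField_lieBracket]
    exact ihX.lieBracket_vectorField ihY (by simp)

lemma LieGen.isSmoothBracketClosed {n : ℕ} {F : Set (State n → State n)}
    (hF : ∀ X ∈ F, ContDiff ℝ ∞ X) : IsSmoothBracketClosed ℝ {X | LieGen n F X} where
  contDiff _ hX := LieGen.contDiff hF hX
  lieBracket_mem X hX Y hY := .bracket X Y hX hY

section Drift

variable {n : ℕ} [NeZero n] {Φ : ℝ → ℝ}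

/-- The displacement `q_j - q_{j+1}` across the bond joining particles `j` and `j + 1`, as a linear
functional of the state. It is the argument of `φ` in the force transmitted by that bond. -/
def displacement (j : Fin n) : State n →L[ℝ] ℝ :=
  (.proj j - .proj (j + 1) : (Fin n → ℝ) →L[ℝ] ℝ).comp (.fst ℝ (Fin n → ℝ) (Fin n → ℝ))

lemma displacement_apply (j : Fin n) (x : State n) : displacement j x = x.1 j - x.1 (j + 1) := rfl

lemma drift_eq_displacement : drift n Φ = fun x =>
    (x.2, fun k => deriv Φ (displacement (k - 1) x) - deriv Φ (displacement k x)) := by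
  simp [drift, displacement_apply, funext_iff]

lemma contDiff_drift {m : ℕ∞ω} (hφ : ContDiff ℝ m (deriv Φ)) : ContDiff ℝ m (drift n Φ) := by
  rw [drift_eq_displacement]
  exact contDiff_snd.prodMk (contDiff_pi.2 fun k =>
    (hφ.comp (displacement (k - 1)).contDiff).sub (hφ.comp (displacement k).contDiff))

lemma fderiv_drift (hφ : Differentiable ℝ (deriv Φ)) (x v : State n) :
    fderiv ℝ (drift n Φ) x v = (v.2, fun k =>
      deriv (deriv Φ) (displacement (k - 1) x) * displacement (k - 1) v
        - deriv (deriv Φ) (displacement k x) * displacement k v) := by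
  have hforce (k : Fin n) : HasFDerivAt (fun y : State n => deriv Φ (displacement k y))
      (deriv (deriv Φ) (displacement k x) • displacement k) x :=
    (hφ _).hasDerivAt.comp_hasFDerivAt x (displacement k).hasFDerivAt
  rw [drift_eq_displacement, (hasFDerivAt_snd.prodMk (hasFDerivAt_pi.2 fun k =>
    (hforce (k - 1)).fun_sub (hforce k))).fderiv]
  rfl

lemma lieBracket_drift_const (v x : State n) :
    VectorField.lieBracket ℝ (drift n Φ) (fun _ => v) x = -fderiv ℝ (drift n Φ) x v := by
  simp [VectorField.lieBracket]

lemma lieBracket_drift_ep (hφ : Differentiable ℝ (deriv Φ)) (j : Fin n) :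
    VectorField.lieBracket ℝ (drift n Φ) (fun _ => ep n j) = fun _ => -eq' n j := by
  funext x
  rw [lieBracket_drift_const, fderiv_drift hφ]
  simp [displacement_apply, ep, eq', Prod.ext_iff, funext_iff]

lemma displacement_eq' (j k : Fin n) :
    displacement k (eq' n j) =
      (Pi.single j 1 : Fin n → ℝ) k - (Pi.single (j - 1) 1 : Fin n → ℝ) k := by
  simp [displacement_apply, eq', Pi.single_apply, eq_sub_iff_add_eq]

lemma lieBracket_drift_eq' (hφ : Differentiable ℝ (deriv Φ)) (j : Fin n) (x : State n) :
    VectorField.lieBracket ℝ (drift n Φ) (fun _ => eq' n j) x =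
      deriv (deriv Φ) (displacement (j - 1) x) • (ep n j - ep n (j - 1))
        - deriv (deriv Φ) (displacement j x) • (ep n (j + 1) - ep n j) := by
  set ψ : Fin n → ℝ := fun i => deriv (deriv Φ) (displacement i x)
  have hmul_single (i k : Fin n) :
      ψ k * (Pi.single i 1 : Fin n → ℝ) k = ψ i * (Pi.single i 1 : Fin n → ℝ) k := by
    rcases eq_or_ne k i with rfl | h <;> simp [*]
  have hshift (i k : Fin n) :
      (Pi.single i 1 : Fin n → ℝ) (k - 1) = (Pi.single (i + 1) 1 : Fin n → ℝ) k := by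
    simp [Pi.single_apply, sub_eq_iff_eq_add]
  have hforce (k : Fin n) : ψ k * displacement k (eq' n j) =
      ψ j * (Pi.single j 1 : Fin n → ℝ) k - ψ (j - 1) * (Pi.single (j - 1) 1 : Fin n → ℝ) k := by
    rw [displacement_eq', mul_sub, hmul_single, hmul_single]
  rw [lieBracket_drift_const, fderiv_drift hφ]
  refine Prod.ext (by simp [ep, eq']) (funext fun k => ?_)
  calc -(ψ (k - 1) * displacement (k - 1) (eq' n j) - ψ k * displacement k (eq' n j))
    _ = ψ (j - 1) * ((Pi.single j 1 : Fin n → ℝ) k - (Pi.single (j - 1) 1 : Fin n → ℝ) k)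
        - ψ j * ((Pi.single (j + 1) 1 : Fin n → ℝ) k - (Pi.single j 1 : Fin n → ℝ) k) := by
      rw [hforce, hforce, hshift, hshift, sub_add_cancel]
      ring

variable {S : Set (State n → State n)} {x : State n}

lemma germSpan_eq'_of_ep (hS : IsSmoothBracketClosed ℝ S) (hf : drift n Φ ∈ S)
    (hφ : Differentiable ℝ (deriv Φ)) {j : Fin n} (hp : GermSpan ℝ S x fun _ => ep n j) :
    GermSpan ℝ S x fun _ => eq' n j := by
  have hbracket := GermSpan.lieBracket hS (.of_mem hf) hp
  rw [lieBracket_drift_ep hφ] at hbracket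
  exact hbracket.neg.congr (.of_forall fun _ => neg_neg _)

lemma germSpan_deriv_deriv_smul_ep_add_one (hS : IsSmoothBracketClosed ℝ S) (hf : drift n Φ ∈ S)
    (hφ : ContDiff ℝ ∞ (deriv Φ)) {j : Fin n} (hpred : GermSpan ℝ S x fun _ => ep n (j - 1))
    (hp : GermSpan ℝ S x fun _ => ep n j) :
    GermSpan ℝ S x fun y => deriv (deriv Φ) (displacement j y) • ep n (j + 1) := by
  obtain ⟨hφ', hψ⟩ := contDiff_infty_iff_deriv.1 hφ
  have hψ_at (i : Fin n) :
      ContDiffAt ℝ ∞ (fun y => deriv (deriv Φ) (displacement i y)) x :=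
    (hψ.comp (displacement i).contDiff).contDiffAt
  have hbracket := GermSpan.lieBracket hS (.of_mem hf) (germSpan_eq'_of_ep hS hf hφ' hp)
  refine ((hbracket.neg.add (hp.smul ((hψ_at (j - 1)).add (hψ_at j)))).add
    (hpred.smul (hψ_at (j - 1))).neg).congr (.of_forall fun y => ?_)
  simp only [Pi.add_apply, Pi.neg_apply, lieBracket_drift_eq' hφ']
  module

lemma germSpan_ep_add_one (hS : IsSmoothBracketClosed ℝ S) (hf : drift n Φ ∈ S)
    (hφ : ContDiff ℝ ∞ (deriv Φ)) {j : Fin n}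
    (hψ : ∃ m, iteratedDeriv m (deriv (deriv Φ)) (displacement j x) ≠ 0)
    (hpred : GermSpan ℝ S x fun _ => ep n (j - 1)) (hp : GermSpan ℝ S x fun _ => ep n j) :
    GermSpan ℝ S x fun _ => ep n (j + 1) := by
  rcases eq_or_ne (j + 1) j with hj | hj
  · rwa [hj]
  obtain ⟨m, hm⟩ := hψ
  obtain ⟨hφ', hφ''⟩ := contDiff_infty_iff_deriv.1 hφ
  have hq := germSpan_eq'_of_ep hS hf hφ' hp
  have hdisplacement : displacement j (eq' n j) ≠ 0 := by simp [displacement_apply, eq', hj]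
  exact hq.const_of_comp_smul_const hS hdisplacement hφ''
    (germSpan_deriv_deriv_smul_ep_add_one hS hf hφ hpred hp) hm

open Fin.NatCast in
lemma germSpan_ep (hS : IsSmoothBracketClosed ℝ S) (hf : drift n Φ ∈ S)
    (hφ : ContDiff ℝ ∞ (deriv Φ)) (hψ : ∀ y, ∃ m, iteratedDeriv m (deriv (deriv Φ)) y ≠ 0)
    (hfirst : GermSpan ℝ S x fun _ => ep n 0) (hlast : GermSpan ℝ S x fun _ => ep n (-1))
    (j : Fin n) : GermSpan ℝ S x fun _ => ep n j := by
  have hpair (m : ℕ) : (GermSpan ℝ S x fun _ => ep n ((m : Fin n) - 1)) ∧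
      GermSpan ℝ S x fun _ => ep n (m : Fin n) := by
    induction m with
    | zero => simpa using ⟨hlast, hfirst⟩
    | succ m ih =>
      rw [Nat.cast_succ, add_sub_cancel_right]
      exact ⟨ih.2, germSpan_ep_add_one hS hf hφ (hψ _) ih.1 ih.2⟩
  simpa using (hpair j).2

lemma eq_top_of_eq'_mem_of_ep_mem {V : Submodule ℝ (State n)} (hq : ∀ j, eq' n j ∈ V)
    (hp : ∀ j, ep n j ∈ V) : V = ⊤ := by
  refine eq_top_iff.2 fun x _ => ?_
  have hx : x = ∑ j, x.1 j • eq' n j + ∑ j, x.2 j • ep n j := by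
    ext k <;> simp [eq', ep, Prod.fst_sum, Prod.snd_sum, Finset.sum_apply, Pi.single_apply]
  rw [hx]
  exact V.add_mem (V.sum_mem fun j _ => V.smul_mem _ (hq j))
    (V.sum_mem fun j _ => V.smul_mem _ (hp j))

end Drift

lemma exists_iteratedDeriv_ne_zero_of_analyticOnNhd {𝕜 F : Type*} [NontriviallyNormedField 𝕜]
    [CharZero 𝕜] [PreconnectedSpace 𝕜] [NormedAddCommGroup F] [NormedSpace 𝕜 F] [CompleteSpace F]
    {f : 𝕜 → F} (hf : AnalyticOnNhd 𝕜 f univ) (hf0 : f ≠ 0) (y : 𝕜) :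
    ∃ m, iteratedDeriv m f y ≠ 0 := by
  by_contra! hzero
  have horder : analyticOrderAt f y = ⊤ := ENat.eq_top_iff_forall_ge.2 fun m =>
    (natCast_le_analyticOrderAt_iff_iteratedDeriv_eq_zero (hf y trivial)).2 fun i _ => hzero i
  exact hf0 (hf.eq_of_eventuallyEq (fun _ _ => analyticAt_const) (analyticOrderAt_eq_top.1 horder))

lemma eq_add_smul_of_deriv_deriv_eq_zero {𝕜 F : Type*} [RCLike 𝕜] [NormedAddCommGroup F]
    [NormedSpace 𝕜 F] {f : 𝕜 → F} (hf : Differentiable 𝕜 f) (hf' : Differentiable 𝕜 (deriv f))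
    (h : deriv (deriv f) = 0) (y : 𝕜) : f y = f 0 + y • deriv f 0 := by
  have hslope (z : 𝕜) : deriv f z = deriv f 0 := is_const_of_deriv_eq_zero hf' (congrFun h) z 0
  have hderiv (z : 𝕜) : HasDerivAt (fun t => f t - t • deriv f 0) 0 z := by
    simpa [hslope z] using! (hf z).hasDerivAt.sub ((hasDerivAt_id z).smul_const (deriv f 0))
  have hconst := is_const_of_deriv_eq_zero (fun z => (hderiv z).differentiableAt)
    (fun z => (hderiv z).deriv) y 0
  simpa [sub_eq_iff_eq_add] using hconst

namespace Admissible

variable {Φ : ℝ → ℝ}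

lemma contDiff (h : Admissible Φ) {m : ℕ∞ω} : ContDiff ℝ m Φ :=
  AnalyticOnNhd.contDiff fun x _ => h.1 x

lemma deriv_deriv_ne_zero (h : Admissible Φ) : deriv (deriv Φ) ≠ 0 := by
  intro h0
  obtain ⟨hd, hφ⟩ := contDiff_infty_iff_deriv.1 h.contDiff
  have haffine := eq_add_smul_of_deriv_deriv_eq_zero hd (hφ.differentiable (by simp)) h0
  have hreflect (y : ℝ) : Φ (-y) = 2 * Φ 0 - Φ y := by
    rw [haffine y, haffine (-y)]
    simp only [smul_eq_mul]
    ring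
  obtain ⟨-, ⟨c, hc⟩, hlim⟩ := h
  obtain ⟨y, hy⟩ := (hlim.eventually_gt_atTop (2 * Φ 0 - c)).exists
  have hcy : c ≤ Φ (-y) := hc (mem_range_self (-y))
  linarith [hreflect y]

lemma exists_iteratedDeriv_ne_zero (h : Admissible Φ) (y : ℝ) :
    ∃ m, iteratedDeriv m (deriv (deriv Φ)) y ≠ 0 :=
  exists_iteratedDeriv_ne_zero_of_analyticOnNhd (fun x _ => (h.1 x).deriv.deriv)
    h.deriv_deriv_ne_zero y

end Admissible

theorem bracket_generating_double_forced_general (n : ℕ) [NeZero n] (Φ : ℝ → ℝ)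
    (hΦ : ContDiff ℝ ∞ Φ) (hψ : ∀ y, ∃ m, iteratedDeriv m (deriv (deriv Φ)) y ≠ 0)
    (x : State n) :
    Submodule.span ℝ
      {v : State n | ∃ X : State n → State n,
        LieGen n {drift n Φ, fun _ => ep n 0, fun _ => ep n (-1)} X ∧ X x = v} = ⊤ := by
  have hφ : ContDiff ℝ ∞ (deriv Φ) := (contDiff_infty_iff_deriv.1 hΦ).2
  set F : Set (State n → State n) := {drift n Φ, fun _ => ep n 0, fun _ => ep n (-1)} with hF
  have hS : IsSmoothBracketClosed ℝ {X | LieGen n F X} := by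
    refine LieGen.isSmoothBracketClosed ?_
    rintro X (rfl | rfl | rfl)
    exacts [contDiff_drift hφ, contDiff_const, contDiff_const]
  have hf : LieGen n F (drift n Φ) := .base _ (by simp [hF])
  have hp : ∀ j, GermSpan ℝ {X | LieGen n F X} x fun _ => ep n j :=
    germSpan_ep hS hf hφ hψ (.of_mem (.base _ (by simp [hF]))) (.of_mem (.base _ (by simp [hF])))
  have hq (j : Fin n) : GermSpan ℝ {X | LieGen n F X} x fun _ => eq' n j :=
    germSpan_eq'_of_ep hS hf (hφ.differentiable (by simp)) (hp j)
  exact eq_top_of_eq'_mem_of_ep_mem (fun j => (hq j).apply_mem_span)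
    fun j => (hp j).apply_mem_span

/-- For admissible `Φ`, the family `{f, g, gⁿ}` (with `g = ∂/∂p₁`,
`gⁿ = ∂/∂pₙ`) is bracket generating at every point of ℝ^{2n}. -/
theorem bracket_generating_double_forced (n : ℕ) [NeZero n] (hn : 3 ≤ n) (Φ : ℝ → ℝ)
    (hadm : Admissible Φ) :
    ∀ x : State n,
      Submodule.span ℝ
        {v : State n | ∃ X : State n → State n,
          LieGen n {drift n Φ, fun _ => ep n 0, fun _ => ep n (-1)} X ∧ X x = v} = ⊤ :=
  bracket_generating_double_forced_general n Φ hadm.contDiff hadm.exists_iteratedDeriv_ne_zero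
end
end

section
/- Invariance and bracket generation of the 2-distribution on the zero-momentum hyperplane: Assume Φ is admissible and generic. Then: (a) at every point x ∈ ℝ^{2n} the vectors f(x) and [g,f](x) = e_{q₁} lie in the hyperplane direction space T = {(v,w) ∈ ℝⁿ × ℝⁿ : w₁ + ⋯ + wₙ = 0}, so the distribution D spanned by f and [g,f] is tangent to Π; (b) letting L be the smallest set of smooth vector fields containing f and [g,f] and closed under Lie brackets, for every x ∈ Π the linear span of {X(x) : X ∈ L} equals T, i.e. D is bracket generating on Π. -/
/-!
Write `ψ = Φ''`, `r_k = q_k - q_{k+1}` and `u_k = ∂/∂p_{k+1} - ∂/∂p_k`. The drift is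
`Σ p_k ∂/∂q_k + Σ Φ'(r_k) u_k`, so bracketing it `m + 1` times with `∂/∂q_j` gives
`ψ⁽ᵐ⁾(r_j) u_j - (-1)ᵐ ψ⁽ᵐ⁾(r_{j-1}) u_{j-1}`. If at some point no two of these combinations
of `u_j` and `u_{j-1}` were independent, the Taylor series of `ψ` at `a = r_j` and `b = r_{j-1}`
would be related by `ψ(b - t) = c ψ(a + t)`; applying this reflection twice gives `c = ±1` (or
`ψ = 0`), so `ψ` would be even or odd about `(a + b) / 2`, contrary to genericity.

Hence near any point `u_j` is a combination of two such brackets with analytic coefficients. By the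
Leibniz rule, brackets of such local combinations are again local combinations, and they contribute
nothing new to the span of the brackets at the point. Since `[u_j, f] = ∂/∂q_{j+1} - ∂/∂q_j`, one
passes from `∂/∂q_j` to `∂/∂q_{j+1}` and, starting from `[g, f] = ∂/∂q_1`, goes all the way around
the ring. The `∂/∂q_j` and `u_j` span `T`.
-/

open scoped BigOperators
open MeasureTheory Filter Set

noncomputable section

/-- The direction space `T = {(v,w) : w₁ + ⋯ + wₙ = 0}` of the zero-momentum hyperplane. -/
def Tset (n : ℕ) : Set (State n) := {y : State n | ∑ i, y.2 i = 0}

open scoped Topology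

/-! ### Taylor coefficients and reflections -/

theorem even_or_odd_of_reflection {K R : Type*} [Field K] [NeZero (2 : K)] [CommRing R]
    [NoZeroDivisors R] {ψ : K → R} {a b : K} {c : R} (h : ∀ t, ψ (b - t) = c * ψ (a + t)) :
    (∀ t, ψ ((a + b) / 2 + t) = ψ ((a + b) / 2 - t)) ∨
      ∀ t, ψ ((a + b) / 2 + t) = -ψ ((a + b) / 2 - t) := by
  have hmid : ∀ t, ψ ((a + b) / 2 - t) = c * ψ ((a + b) / 2 + t) := fun t => by
    convert h ((b - a) / 2 + t) using 2
    · field_simp; ring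
    · congr 1; field_simp; ring
  have htwice : ∀ t, (c * c - 1) * ψ ((a + b) / 2 + t) = 0 := fun t => by
    have := hmid (-t)
    rw [sub_neg_eq_add, ← sub_eq_add_neg, hmid t] at this
    linear_combination -this
  by_cases hψ : ∀ t, ψ ((a + b) / 2 + t) = 0
  · exact .inl fun t => by rw [hψ t, sub_eq_add_neg, hψ (-t)]
  obtain ⟨t₀, ht₀⟩ := not_forall.1 hψ
  have hcc : c * c = 1 := sub_eq_zero.1 ((mul_eq_zero.1 (htwice t₀)).resolve_right ht₀)
  rcases mul_self_eq_one_iff.1 hcc with rfl | rfl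
  · exact .inl fun t => by rw [hmid t, one_mul]
  · exact .inr fun t => by rw [hmid t, neg_one_mul, neg_neg]

theorem eq_zero_or_exists_eq_const_mul_of_wronskian_eq_zero {ι K : Type*} [Field K] {u v : ι → K}
    (h : ∀ i j, u i * v j - u j * v i = 0) : (∀ i, u i = 0) ∨ ∃ c, ∀ i, v i = c * u i := by
  by_cases hu : ∀ i, u i = 0
  · exact .inl hu
  obtain ⟨i₀, hi₀⟩ := not_forall.1 hu
  refine .inr ⟨v i₀ / u i₀, fun i => ?_⟩
  field_simp
  linear_combination h i₀ i

section Taylor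

variable {𝕜 E : Type*} [NontriviallyNormedField 𝕜] [NormedAddCommGroup E] [NormedSpace 𝕜 E]
  [CompleteSpace E]

theorem analyticAt_iteratedDeriv {f : 𝕜 → E} {a : 𝕜} (hf : AnalyticAt 𝕜 f a) (m : ℕ) :
    AnalyticAt 𝕜 (iteratedDeriv m f) a := by
  rw [iteratedDeriv_eq_iterate]
  exact hf.iterated_deriv m

variable [CharZero 𝕜] [PreconnectedSpace 𝕜]

theorem eq_of_forall_iteratedDeriv_eq {f g : 𝕜 → E} (hf : AnalyticOnNhd 𝕜 f univ)
    (hg : AnalyticOnNhd 𝕜 g univ) {a : 𝕜} (h : ∀ m, iteratedDeriv m f a = iteratedDeriv m g a) :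
    f = g := by
  have hfa : AnalyticAt 𝕜 f a := hf a (mem_univ a)
  have hga : AnalyticAt 𝕜 g a := hg a (mem_univ a)
  have htop : analyticOrderAt (f - g) a = ⊤ := ENat.eq_top_iff_forall_ge.2 fun m =>
    (natCast_le_analyticOrderAt_iff_iteratedDeriv_eq_zero (hfa.sub hga)).2 fun i _ => by
      rw [iteratedDeriv_sub hfa.contDiffAt hga.contDiffAt, h, sub_self]
  refine hf.eq_of_eventuallyEq hg (z₀ := a) ?_
  filter_upwards [analyticOrderAt_eq_top.1 htop] with y hy using sub_eq_zero.1 hy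

theorem comp_const_sub_eq_const_mul_comp_const_add [CompleteSpace 𝕜] {ψ : 𝕜 → 𝕜}
    (hψ : AnalyticOnNhd 𝕜 ψ univ) {a b c : 𝕜}
    (h : ∀ m, (-1) ^ m * iteratedDeriv m ψ b = c * iteratedDeriv m ψ a) (t : 𝕜) :
    ψ (b - t) = c * ψ (a + t) := by
  have hb : AnalyticOnNhd 𝕜 (fun t => ψ (b - t)) univ := fun t _ =>
    (hψ (b - t) (mem_univ _)).comp_of_eq (by fun_prop) rfl
  have ha : AnalyticOnNhd 𝕜 (fun t => c * ψ (a + t)) univ := fun t _ =>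
    analyticAt_const.mul ((hψ (a + t) (mem_univ _)).comp_of_eq (by fun_prop) rfl)
  refine congrFun (eq_of_forall_iteratedDeriv_eq hb ha (a := 0) fun m => ?_) t
  rw [iteratedDeriv_comp_const_sub, iteratedDeriv_const_mul_field, iteratedDeriv_comp_const_add]
  simpa using h m

theorem even_or_odd_of_wronskian_eq_zero [CompleteSpace 𝕜] {ψ : 𝕜 → 𝕜}
    (hψ : AnalyticOnNhd 𝕜 ψ univ) {a b : 𝕜}
    (h : ∀ m l, iteratedDeriv m ψ a * ((-1) ^ l * iteratedDeriv l ψ b)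
      - iteratedDeriv l ψ a * ((-1) ^ m * iteratedDeriv m ψ b) = 0) :
    (∀ t, ψ ((a + b) / 2 + t) = ψ ((a + b) / 2 - t)) ∨
      ∀ t, ψ ((a + b) / 2 + t) = -ψ ((a + b) / 2 - t) := by
  rcases eq_zero_or_exists_eq_const_mul_of_wronskian_eq_zero h with hzero | ⟨c, hc⟩
  · have : ψ = fun _ => 0 := eq_of_forall_iteratedDeriv_eq hψ analyticOnNhd_const fun m => by
      rw [hzero m, iteratedDeriv_fun_const_zero]
    exact .inl fun t => by rw [this]
  · exact even_or_odd_of_reflection (comp_const_sub_eq_const_mul_comp_const_add hψ hc)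

end Taylor

/-! ### Analytic combinations of vector fields -/

section VectorFields

variable {𝕜 E F : Type*} [NontriviallyNormedField 𝕜] [NormedAddCommGroup E] [NormedSpace 𝕜 E]
  [NormedAddCommGroup F] [NormedSpace 𝕜 F]

theorem fderiv_apply_mem_of_forall_mem {T : Submodule 𝕜 F} (hT : IsClosed (T : Set F)) {X : E → F}
    (hX : ∀ y, X y ∈ T) (x v : E) : fderiv 𝕜 X x v ∈ T := by
  by_cases hd : DifferentiableAt 𝕜 X x
  · rw [← hd.lineDeriv_eq_fderiv]
    have hspan : Submodule.span 𝕜 ((fun t : 𝕜 => X (x + t • v)) '' univ) ≤ T :=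
      Submodule.span_le.2 (image_subset_iff.2 fun t _ => hX (x + t • v))
    exact closure_minimal hspan hT
      (range_deriv_subset_closure_span_image _ dense_univ (mem_range_self (0 : 𝕜)))
  · simp [fderiv_zero_of_not_differentiableAt hd]

theorem lieBracket_mem_of_forall_mem {T : Submodule 𝕜 E} (hT : IsClosed (T : Set E)) {X Y : E → E}
    (hX : ∀ y, X y ∈ T) (hY : ∀ y, Y y ∈ T) (x : E) : VectorField.lieBracket 𝕜 X Y x ∈ T :=
  T.sub_mem (fderiv_apply_mem_of_forall_mem hT hY x _) (fderiv_apply_mem_of_forall_mem hT hX x _)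

theorem analyticAt_clm_apply {A : E → E →L[𝕜] F} {X : E → E} {x : E} (hA : AnalyticAt 𝕜 A x)
    (hX : AnalyticAt 𝕜 X x) : AnalyticAt 𝕜 (fun y => A y (X y)) x :=
  ((ContinuousLinearMap.id 𝕜 (E →L[𝕜] F)).analyticAt_bilinear (A x, X x)).comp_of_eq
    (hA.prod hX) rfl

theorem analyticAt_lieBracket [CompleteSpace E] {X Y : E → E} {x : E} (hX : AnalyticAt 𝕜 X x)
    (hY : AnalyticAt 𝕜 Y x) : AnalyticAt 𝕜 (VectorField.lieBracket 𝕜 X Y) x :=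
  (analyticAt_clm_apply hY.fderiv hX).sub (analyticAt_clm_apply hX.fderiv hY)

/-- `AnalyticSpan 𝕜 L x Y` says that near `x` the vector field `Y` is a combination of fields in `L`
whose coefficients are functions analytic at `x`; that is, the germ of `Y` at `x` lies in the module
generated by `L` over the ring of germs of analytic functions. -/
inductive AnalyticSpan (𝕜 : Type*) {E : Type*} [NontriviallyNormedField 𝕜] [NormedAddCommGroup E]
    [NormedSpace 𝕜 E] (L : Set (E → E)) (x : E) : (E → E) → Prop
  | mem {X : E → E} (hX : X ∈ L) : AnalyticSpan 𝕜 L x X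
  | add {Y Z : E → E} (hY : AnalyticSpan 𝕜 L x Y) (hZ : AnalyticSpan 𝕜 L x Z) :
      AnalyticSpan 𝕜 L x (Y + Z)
  | smul {h : E → 𝕜} {Y : E → E} (hh : AnalyticAt 𝕜 h x) (hY : AnalyticSpan 𝕜 L x Y) :
      AnalyticSpan 𝕜 L x (fun y => h y • Y y)
  | congr {Y Z : E → E} (hY : AnalyticSpan 𝕜 L x Y) (hYZ : Y =ᶠ[𝓝 x] Z) : AnalyticSpan 𝕜 L x Z

namespace AnalyticSpan

variable {L : Set (E → E)} {x : E} {X Y Z : E → E}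

theorem apply_mem_span (hY : AnalyticSpan 𝕜 L x Y) :
    Y x ∈ Submodule.span 𝕜 ((fun X : E → E => X x) '' L) := by
  induction hY with
  | mem hX => exact Submodule.subset_span (mem_image_of_mem _ hX)
  | add _ _ ihY ihZ => exact Submodule.add_mem _ ihY ihZ
  | smul _ _ ih => exact Submodule.smul_mem _ _ ih
  | congr _ hYZ ih => exact hYZ.eq_of_nhds ▸ ih

theorem neg (hY : AnalyticSpan 𝕜 L x Y) : AnalyticSpan 𝕜 L x (-Y) :=
  (hY.smul (h := fun _ => -1) analyticAt_const).congr (.of_forall fun y => neg_one_smul 𝕜 (Y y))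

theorem left_of_det_ne_zero {a₁ b₁ a₂ b₂ : E → 𝕜} (ha₁ : AnalyticAt 𝕜 a₁ x)
    (hb₁ : AnalyticAt 𝕜 b₁ x) (ha₂ : AnalyticAt 𝕜 a₂ x) (hb₂ : AnalyticAt 𝕜 b₂ x)
    (hdet : a₁ x * b₂ x - a₂ x * b₁ x ≠ 0)
    (h₁ : AnalyticSpan 𝕜 L x fun y => a₁ y • Y y + b₁ y • Z y)
    (h₂ : AnalyticSpan 𝕜 L x fun y => a₂ y • Y y + b₂ y • Z y) : AnalyticSpan 𝕜 L x Y := by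
  have hdet_an : AnalyticAt 𝕜 (fun y => a₁ y * b₂ y - a₂ y * b₁ y) x :=
    (ha₁.mul hb₂).sub (ha₂.mul hb₁)
  -- Cramer's rule
  refine ((h₁.smul (hb₂.div hdet_an hdet)).add (h₂.smul (hb₁.div hdet_an hdet).neg)).congr ?_
  filter_upwards [hdet_an.continuousAt.eventually_ne hdet] with y hy
  simp only [Pi.add_apply, Pi.div_apply, Pi.neg_apply]
  have hY : b₂ y / (a₁ y * b₂ y - a₂ y * b₁ y) * a₁ y
      + -(b₁ y / (a₁ y * b₂ y - a₂ y * b₁ y)) * a₂ y = 1 := by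
    rw [← div_self hy]; ring
  have hZ : b₂ y / (a₁ y * b₂ y - a₂ y * b₁ y) * b₁ y
      + -(b₁ y / (a₁ y * b₂ y - a₂ y * b₁ y)) * b₂ y = 0 := by
    ring
  match_scalars
  · linear_combination hY
  · linear_combination hZ

theorem analyticAt (hL : ∀ X ∈ L, AnalyticAt 𝕜 X x) (hY : AnalyticSpan 𝕜 L x Y) :
    AnalyticAt 𝕜 Y x := by
  induction hY with
  | mem hX => exact hL _ hX
  | add _ _ ihY ihZ => exact ihY.add ihZ
  | smul hh _ ih => exact hh.smul ih
  | congr _ hYZ ih => exact ih.congr hYZ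

variable [CompleteSpace 𝕜] [CompleteSpace E]

theorem lieBracket_right (hL : ∀ X ∈ L, AnalyticAt 𝕜 X x) (hX : AnalyticAt 𝕜 X x)
    (hXL : ∀ Z ∈ L, AnalyticSpan 𝕜 L x (VectorField.lieBracket 𝕜 X Z))
    (hZ : AnalyticSpan 𝕜 L x Z) : AnalyticSpan 𝕜 L x (VectorField.lieBracket 𝕜 X Z) := by
  induction hZ with
  | mem hZ => exact hXL _ hZ
  | add hY hZ ihY ihZ =>
    refine (ihY.add ihZ).congr ?_
    filter_upwards [(hY.analyticAt hL).eventually_analyticAt,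
      (hZ.analyticAt hL).eventually_analyticAt] with y hYy hZy
    exact (VectorField.lieBracket_add_right hYy.differentiableAt hZy.differentiableAt).symm
  | smul hh hY ih =>
    refine ((hY.smul (analyticAt_clm_apply hh.fderiv hX)).add (ih.smul hh)).congr ?_
    filter_upwards [hh.eventually_analyticAt, (hY.analyticAt hL).eventually_analyticAt]
      with y hhy hYy
    exact (VectorField.lieBracket_smul_right hhy.differentiableAt hYy.differentiableAt).symm
  | congr _ hYZ ih => exact ih.congr ((EventuallyEq.refl _ X).lieBracket_vectorField hYZ)

theorem lieBracket (hL : ∀ X ∈ L, AnalyticAt 𝕜 X x)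
    (hbracket : ∀ X ∈ L, ∀ Y ∈ L, VectorField.lieBracket 𝕜 X Y ∈ L)
    (hY : AnalyticSpan 𝕜 L x Y) (hZ : AnalyticSpan 𝕜 L x Z) :
    AnalyticSpan 𝕜 L x (VectorField.lieBracket 𝕜 Y Z) := by
  refine lieBracket_right hL (hY.analyticAt hL) (fun X hX => ?_) hZ
  have hXY : AnalyticSpan 𝕜 L x (VectorField.lieBracket 𝕜 X Y) :=
    lieBracket_right hL (hL X hX) (fun X' hX' => .mem (hbracket X hX X' hX')) hY
  exact hXY.neg.congr (.of_forall fun y => VectorField.lieBracket_swap.symm)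

end AnalyticSpan

end VectorFields

section LieGen

variable {n : ℕ} {F : Set (State n → State n)} {X : State n → State n} {x : State n}

theorem LieGen.analyticAt (hF : ∀ X ∈ F, AnalyticAt ℝ X x) (hX : LieGen n F X) :
    AnalyticAt ℝ X x := by
  induction hX with
  | base X hX => exact hF X hX
  | bracket X Y _ _ ihX ihY => exact analyticAt_lieBracket ihX ihY

theorem LieGen.apply_mem {T : Submodule ℝ (State n)} (hF : ∀ X ∈ F, ∀ x, X x ∈ T)
    (hX : LieGen n F X) (x : State n) : X x ∈ T := by
  induction hX generalizing x with
  | base X hX => exact hF X hX x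
  | bracket X Y _ _ ihX ihY =>
    exact lieBracket_mem_of_forall_mem T.closed_of_finiteDimensional ihX ihY x

theorem AnalyticSpan.lieBracket_lieGen (hF : ∀ X ∈ F, AnalyticAt ℝ X x)
    {Y Z : State n → State n} (hY : AnalyticSpan ℝ {X | LieGen n F X} x Y)
    (hZ : AnalyticSpan ℝ {X | LieGen n F X} x Z) :
    AnalyticSpan ℝ {X | LieGen n F X} x (_root_.lieBracket Y Z) :=
  hY.lieBracket (fun _ hX => hX.analyticAt hF) (fun X hX Y hY => .bracket X Y hX hY) hZ

end LieGen

/-! ### Brackets with the drift -/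

theorem fin_cyclic_induction {n : ℕ} [NeZero n] {P : Fin n → Prop} (zero : P 0)
    (add_one : ∀ k, P k → P (k + 1)) (k : Fin n) : P k := by
  have hcast : ∀ m : ℕ, P (Fin.ofNat n m) := by
    intro m
    induction m with
    | zero => exact zero
    | succ m ih =>
      convert add_one _ ih using 1
      simp [Fin.ext_iff, Fin.val_add]
  simpa using hcast k

theorem lieBracket_const_left {n : ℕ} (c : State n) (X : State n → State n) (x : State n) :
    lieBracket (fun _ => c) X x = fderiv ℝ X x c := by
  simp [lieBracket]

section Drift

variable {n : ℕ} [NeZero n] {Φ : ℝ → ℝ}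

/-- The linear form `q_k - q_{k+1}` on the state space, the argument of the potential between the
particles `k` and `k + 1`. -/
def gap (k : Fin n) : State n →L[ℝ] ℝ :=
  (ContinuousLinearMap.proj (R := ℝ) (φ := fun _ : Fin n => ℝ) k
    - ContinuousLinearMap.proj (k + 1)) ∘L ContinuousLinearMap.fst ℝ (Fin n → ℝ) (Fin n → ℝ)

theorem gap_apply (k : Fin n) (x : State n) : gap k x = x.1 k - x.1 (k + 1) :=
  rfl

/-- The direction `∂/∂p_{k+1} - ∂/∂p_k` in which the interaction of the particles `k` and `k + 1`
exchanges momentum. -/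
def momentumExchange (k : Fin n) : State n :=
  ep n (k + 1) - ep n k

/-- The vector field `Σ h_k(q_k - q_{k+1}) (∂/∂p_{k+1} - ∂/∂p_k)` of nearest-neighbour interactions
with force laws `h_k`; the drift is the case `h_k = Φ'` plus the kinetic part `Σ p_k ∂/∂q_k`. -/
def interaction (h : Fin n → ℝ → ℝ) (x : State n) : State n :=
  ∑ k, h k (gap k x) • momentumExchange k

theorem fst_interaction (h : Fin n → ℝ → ℝ) (x : State n) : (interaction h x).1 = 0 := by
  simp [interaction, momentumExchange, ep, Prod.fst_sum]

theorem snd_interaction (h : Fin n → ℝ → ℝ) (x : State n) (i : Fin n) :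
    (interaction h x).2 i = h (i - 1) (gap (i - 1) x) - h i (gap i x) := by
  have hi : ∀ k, i = k + 1 ↔ k = i - 1 := fun k => by rw [eq_sub_iff_add_eq, eq_comm]
  simp [interaction, momentumExchange, ep, Prod.snd_sum, Pi.single_apply, mul_sub, hi]

theorem drift_eq_kinetic_add_interaction (x : State n) :
    drift n Φ x = (x.2, 0) + interaction (fun _ => deriv Φ) x := by
  refine Prod.ext ?_ (funext fun i => ?_)
  · simp [drift, fst_interaction]
  · simp [drift, snd_interaction, gap_apply]

theorem hasFDerivAt_interaction {h : Fin n → ℝ → ℝ} (hh : ∀ k, Differentiable ℝ (h k))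
    (x : State n) :
    HasFDerivAt (interaction h)
      (∑ k, (deriv (h k) (gap k x) • gap k).smulRight (momentumExchange k)) x :=
  HasFDerivAt.fun_sum fun k _ =>
    ((hh k _).hasDerivAt.comp_hasFDerivAt x (gap k).hasFDerivAt).smul_const (momentumExchange k)

theorem analyticAt_interaction {h : Fin n → ℝ → ℝ} (hh : ∀ k t, AnalyticAt ℝ (h k) t)
    (x : State n) : AnalyticAt ℝ (interaction h) x :=
  Finset.analyticAt_fun_sum _ fun k _ =>
    ((hh k _).comp_of_eq ((gap k).analyticAt x) rfl).smul analyticAt_const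

theorem lieBracket_const_interaction {h : Fin n → ℝ → ℝ} (hh : ∀ k, Differentiable ℝ (h k))
    (c : State n) :
    lieBracket (fun _ => c) (interaction h) =
      interaction fun k t => gap k c * deriv (h k) t := by
  funext x
  rw [lieBracket_const_left, (hasFDerivAt_interaction hh x).fderiv]
  simp [interaction, mul_comm]

theorem lieBracket_const_drift (hΦ : Differentiable ℝ (deriv Φ)) (c : State n) :
    lieBracket (fun _ => c) (drift n Φ) =
      fun x => (c.2, 0) + interaction (fun k t => gap k c * deriv (deriv Φ) t) x := by
  let kinetic : State n →L[ℝ] State n :=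
    ContinuousLinearMap.inl ℝ (Fin n → ℝ) (Fin n → ℝ) ∘L
      ContinuousLinearMap.snd ℝ (Fin n → ℝ) (Fin n → ℝ)
  have hdrift : drift n Φ = fun x => kinetic x + interaction (fun _ => deriv Φ) x :=
    funext drift_eq_kinetic_add_interaction
  have hinter := hasFDerivAt_interaction (n := n) fun _ => hΦ
  funext x
  rw [lieBracket_const_left, hdrift, (kinetic.hasFDerivAt.fun_add (hinter x)).fderiv,
    add_apply, ← (hinter x).fderiv, ← lieBracket_const_left,
    lieBracket_const_interaction fun _ => hΦ]
  rfl

theorem lieBracket_momentum_drift (hΦ : Differentiable ℝ (deriv Φ)) (w : Fin n → ℝ) :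
    lieBracket (fun _ => ((0, w) : State n)) (drift n Φ) = fun _ => (w, 0) := by
  rw [lieBracket_const_drift hΦ]
  simp [interaction, gap_apply]

theorem lieBracket_momentumExchange_drift (hΦ : Differentiable ℝ (deriv Φ)) (k : Fin n) :
    lieBracket (fun _ => momentumExchange k) (drift n Φ) = fun _ => eq' n (k + 1) - eq' n k := by
  simpa [momentumExchange, ep, eq'] using
    lieBracket_momentum_drift hΦ (Pi.single (k + 1) 1 - Pi.single k 1)

theorem analyticAt_drift (hΦ : ∀ t, AnalyticAt ℝ Φ t) (x : State n) :
    AnalyticAt ℝ (drift n Φ) x := by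
  rw [funext drift_eq_kinetic_add_interaction]
  exact (analyticAt_snd.prod analyticAt_const).add
    (analyticAt_interaction (fun _ t => (hΦ t).deriv) x)

theorem iterate_lieBracket_position_drift (hΦ : ∀ t, AnalyticAt ℝ Φ t) (v : Fin n → ℝ) (m : ℕ) :
    (lieBracket fun _ => ((v, 0) : State n))^[m + 1] (drift n Φ) =
      interaction fun k t => gap k (v, 0) ^ (m + 1) * iteratedDeriv m (deriv (deriv Φ)) t := by
  have hψ : ∀ m t, AnalyticAt ℝ (iteratedDeriv m (deriv (deriv Φ))) t := fun m t =>
    analyticAt_iteratedDeriv (hΦ t).deriv.deriv m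
  induction m with
  | zero =>
    simp [Prod.mk_zero_zero, lieBracket_const_drift fun t => (hΦ t).deriv.differentiableAt]
  | succ m ih =>
    rw [Function.iterate_succ_apply', ih, lieBracket_const_interaction fun k t =>
      ((hψ m t).differentiableAt.const_mul _)]
    simp [deriv_const_mul_field, iteratedDeriv_succ, pow_succ', mul_assoc]

theorem interaction_gap_position_pow (j : Fin n) (m : ℕ) (h : ℝ → ℝ) (x : State n) :
    interaction (fun k t => gap k (eq' n j) ^ (m + 1) * h t) x =
      h (gap j x) • momentumExchange j +
        ((-1) ^ m * h (gap (j - 1) x)) • -momentumExchange (j - 1) := by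
  have hj : ∀ k, k + 1 = j ↔ k = j - 1 := fun k => eq_sub_iff_add_eq.symm
  -- A single particle (`n = 1`) is its own neighbour, and both sides vanish.
  by_cases hone : (1 : Fin n) = 0
  · simp [interaction, momentumExchange, hone]
  have hne : j ≠ j - 1 := fun h => hone (sub_eq_self.1 h.symm)
  have hpow : ∀ k, gap k (eq' n j) ^ (m + 1) =
      (if k = j then 1 else 0) + (if k = j - 1 then -(-1) ^ m else 0) := by
    intro k
    rcases eq_or_ne k j with rfl | hkj
    · simp [gap_apply, eq', hone, hne]
    · rcases eq_or_ne k (j - 1) with rfl | hkj'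
      · simp [gap_apply, eq', hne.symm, pow_succ]
      · simp [gap_apply, eq', hj, hkj, hkj']
  simp [interaction, hpow, add_mul, add_smul, Finset.sum_add_distrib, neg_smul]

end Drift

/-! ### Generation of the direction space -/

section Generation

variable {n : ℕ} [NeZero n] {Φ : ℝ → ℝ} {F : Set (State n → State n)} {x : State n}

theorem analyticSpan_momentumExchange (hΦ : ∀ t, AnalyticAt ℝ Φ t) (hgen : Generic Φ)
    (hF : ∀ X ∈ F, AnalyticAt ℝ X x) (hf : drift n Φ ∈ F) {j : Fin n}
    (hj : AnalyticSpan ℝ {X | LieGen n F X} x fun _ => eq' n j) :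
    AnalyticSpan ℝ {X | LieGen n F X} x fun _ => momentumExchange j := by
  let ψ := deriv (deriv Φ)
  have hψ : ∀ t, AnalyticAt ℝ ψ t := fun t => (hΦ t).deriv.deriv
  let a (m : ℕ) (y : State n) : ℝ := iteratedDeriv m ψ (gap j y)
  let b (m : ℕ) (y : State n) : ℝ := (-1) ^ m * iteratedDeriv m ψ (gap (j - 1) y)
  have hcomp : ∀ m k, AnalyticAt ℝ (fun y : State n => iteratedDeriv m ψ (gap k y)) x := fun m k =>
    (analyticAt_iteratedDeriv (hψ _) m).comp_of_eq ((gap k).analyticAt x) rfl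
  have ha : ∀ m, AnalyticAt ℝ (a m) x := fun m => hcomp m j
  have hb : ∀ m, AnalyticAt ℝ (b m) x := fun m => analyticAt_const.mul (hcomp m (j - 1))
  have hbrackets : ∀ m, AnalyticSpan ℝ {X | LieGen n F X} x
      fun y => a m y • momentumExchange j + b m y • -momentumExchange (j - 1) := by
    intro m
    have hiter := Function.Iterate.rec (AnalyticSpan ℝ {X | LieGen n F X} x)
      (.mem (LieGen.base _ hf)) (fun _ hX => hj.lieBracket_lieGen hF hX) (m + 1)
    rw [eq', iterate_lieBracket_position_drift hΦ] at hiter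
    exact hiter.congr (.of_forall (interaction_gap_position_pow j m _))
  obtain ⟨m, l, hdet⟩ : ∃ m l, a m x * b l x - a l x * b m x ≠ 0 := by
    by_contra! hzero
    rcases even_or_odd_of_wronskian_eq_zero (fun t _ => hψ t) hzero with heven | hodd
    · exact (hgen _).1 heven
    · exact (hgen _).2 hodd
  exact .left_of_det_ne_zero (ha m) (hb m) (ha l) (hb l) hdet (hbrackets m) (hbrackets l)

theorem analyticSpan_position (hΦ : ∀ t, AnalyticAt ℝ Φ t) (hgen : Generic Φ)
    (hF : ∀ X ∈ F, AnalyticAt ℝ X x) (hf : drift n Φ ∈ F) (h₀ : (fun _ => eq' n 0) ∈ F)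
    (j : Fin n) : AnalyticSpan ℝ {X | LieGen n F X} x fun _ => eq' n j := by
  induction j using fin_cyclic_induction with
  | zero => exact .mem (.base _ h₀)
  | add_one j ih =>
    have hdiff := (analyticSpan_momentumExchange hΦ hgen hF hf ih).lieBracket_lieGen hF
      (.mem (.base _ hf))
    rw [lieBracket_momentumExchange_drift fun t => (hΦ t).deriv.differentiableAt] at hdiff
    exact (hdiff.add ih).congr (.of_forall fun _ => sub_add_cancel _ _)

/-- The direction space `T` of the zero-momentum hyperplane as a subspace. -/
def directionSpace (n : ℕ) : Submodule ℝ (State n) where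
  carrier := Tset n
  zero_mem' := by simp [Tset]
  add_mem' {v w} (hv : ∑ i, v.2 i = 0) (hw : ∑ i, w.2 i = 0) := by
    simp [Tset, Finset.sum_add_distrib, hv, hw]
  smul_mem' c v (hv : ∑ i, v.2 i = 0) := by simp [Tset, ← Finset.mul_sum, hv]

theorem position_mem_directionSpace (j : Fin n) : eq' n j ∈ directionSpace n := by
  simp [directionSpace, Tset, eq']

theorem momentumExchange_mem_directionSpace (j : Fin n) :
    momentumExchange j ∈ directionSpace n := by
  simp [directionSpace, Tset, momentumExchange, ep]

theorem drift_mem_directionSpace (x : State n) : drift n Φ x ∈ directionSpace n := by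
  rw [drift_eq_kinetic_add_interaction]
  refine add_mem (by simp [directionSpace, Tset]) (sum_mem fun k _ => ?_)
  exact Submodule.smul_mem _ _ (momentumExchange_mem_directionSpace k)

theorem eq_sum_position_add_sum_momentum_sub {y : State n} (hy : y ∈ directionSpace n) :
    y = ∑ k, y.1 k • eq' n k + ∑ k, y.2 k • (ep n k - ep n 0) := by
  have hy' : ∑ k, y.2 k = 0 := hy
  simp only [smul_sub, Finset.sum_sub_distrib, ← Finset.sum_smul, hy', zero_smul, sub_zero]
  ext j <;> simp [Prod.fst_sum, Prod.snd_sum, eq', ep, Pi.single_apply]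

theorem directionSpace_le {S : Submodule ℝ (State n)} (hq : ∀ k, eq' n k ∈ S)
    (hp : ∀ k, momentumExchange k ∈ S) : directionSpace n ≤ S := by
  have hp₀ : ∀ k, ep n k - ep n 0 ∈ S := fin_cyclic_induction (by simp) fun k ih => by
    simpa [momentumExchange] using S.add_mem (hp k) ih
  intro y hy
  rw [eq_sum_position_add_sum_momentum_sub hy]
  exact S.add_mem (S.sum_mem fun k _ => S.smul_mem _ (hq k))
    (S.sum_mem fun k _ => S.smul_mem _ (hp₀ k))

theorem span_lieGen_eq_directionSpace (hΦ : ∀ t, AnalyticAt ℝ Φ t) (hgen : Generic Φ)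
    (x : State n) :
    Submodule.span ℝ {v | ∃ X, LieGen n {drift n Φ, fun _ => eq' n 0} X ∧ X x = v} =
      directionSpace n := by
  have hF : ∀ X ∈ ({drift n Φ, fun _ => eq' n 0} : Set (State n → State n)),
      AnalyticAt ℝ X x ∧ ∀ y, X y ∈ directionSpace n := by
    rintro X (rfl | rfl)
    · exact ⟨analyticAt_drift hΦ x, drift_mem_directionSpace⟩
    · exact ⟨analyticAt_const, fun _ => position_mem_directionSpace 0⟩
  have hf : drift n Φ ∈ ({drift n Φ, fun _ => eq' n 0} : Set (State n → State n)) := .inl rfl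
  have hq := analyticSpan_position hΦ hgen (fun X hX => (hF X hX).1) hf (.inr rfl)
  refine le_antisymm (Submodule.span_le.2 ?_) (directionSpace_le (fun k => ?_) fun k => ?_)
  · rintro _ ⟨X, hX, rfl⟩
    exact hX.apply_mem (fun X hX => (hF X hX).2) x
  · exact (hq k).apply_mem_span
  · exact (analyticSpan_momentumExchange hΦ hgen (fun X hX => (hF X hX).1) hf (hq k)).apply_mem_span

end Generation

theorem distribution_on_zero_momentum_general (n : ℕ) [NeZero n] (Φ : ℝ → ℝ)
    (hΦ : ∀ t, AnalyticAt ℝ Φ t) (hgen : Generic Φ) :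
    (∀ x : State n, lieBracket (fun _ => ep n 0) (drift n Φ) x = eq' n 0) ∧
    (∀ x : State n, drift n Φ x ∈ Tset n ∧
      lieBracket (fun _ => ep n 0) (drift n Φ) x ∈ Tset n) ∧
    (∀ x : State n,
      (Submodule.span ℝ
        {v : State n | ∃ X : State n → State n,
          LieGen n {drift n Φ, lieBracket (fun _ => ep n 0) (drift n Φ)} X ∧ X x = v} :
            Set (State n)) = Tset n) := by
  have hgf : lieBracket (fun _ => ep n 0) (drift n Φ) = fun _ => eq' n 0 :=
    lieBracket_momentum_drift (fun t => (hΦ t).deriv.differentiableAt) (Pi.single 0 1)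
  rw [hgf]
  exact ⟨fun _ => rfl,
    fun x => ⟨drift_mem_directionSpace x, position_mem_directionSpace 0⟩,
    fun x => congrArg SetLike.coe (span_lieGen_eq_directionSpace hΦ hgen x)⟩

/-- Invariance and bracket generation of the 2-distribution spanned by
`f` and `[g,f]` on the zero-momentum hyperplane `Π`. -/
theorem distribution_on_zero_momentum (n : ℕ) [NeZero n] (hn : 3 ≤ n) (Φ : ℝ → ℝ)
    (hadm : Admissible Φ) (hgen : Generic Φ) :
    (∀ x : State n, lieBracket (fun _ => ep n 0) (drift n Φ) x = eq' n 0) ∧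
    (∀ x : State n, drift n Φ x ∈ Tset n ∧
      lieBracket (fun _ => ep n 0) (drift n Φ) x ∈ Tset n) ∧
    (∀ x : State n, (∑ i, x.2 i = 0) →
      (Submodule.span ℝ
        {v : State n | ∃ X : State n → State n,
          LieGen n {drift n Φ, lieBracket (fun _ => ep n 0) (drift n Φ)} X ∧ X x = v} :
            Set (State n)) = Tset n) := by
  obtain ⟨hgf, htangent, hspan⟩ := distribution_on_zero_momentum_general n Φ hadm.1 hgen
  exact ⟨hgf, htangent, fun x _ => hspan x⟩
end
end

section
/- Low-dimensional invariant plane for the nonperiodic trimer forced at the middle particle: Let b ∈ ℝ, let h : ℝ → ℝ be a continuously differentiable odd function, and set φ(t) = h(t − b). Consider the controlled nonperiodic trimer: q̇ᵢ = pᵢ (i = 1,2,3), ṗ₁ = −φ(q₁−q₂), ṗ₂ = φ(q₁−q₂) − φ(q₂−q₃) + u(t), ṗ₃ = φ(q₂−q₃), where u : [0,θ] → ℝ is any measurable essentially bounded control. If an absolutely continuous solution (q(t), p(t)) on [0,θ] satisfies q₃(0) − q₁(0) = −2b and p₃(0) = p₁(0), then q₃(t) − q₁(t) = −2b and p₃(t)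 = p₁(t) for all t ∈ [0,θ]; i.e. the 4-dimensional plane Π′_b : {q₃ − q₁ = −2b, p₃ − p₁ = 0} is invariant for the control system, so every orbit through a point of Π′_b is contained in Π′_b. -/
open MeasureTheory Filter Set

noncomputable section

/-! The control reaches `P₁` and `P₃` only through the position `q₂` of the middle particle, which
may be any continuous curve. As `h` is odd, `q₁` solves the Newton equation
`x'' = h (b - (x - q₂))`. The force `h (q₂ - q₃ - b)` on `P₃` is `h (b - (x - q₂))` at
`x = q₃ + 2b`, so `q₃ + 2b` solves the same equation. On the plane both solutions have the same
initial position and velocity, hence they coincide by uniqueness. -/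

open scoped NNReal

lemma lipschitzOnWith_firstOrderSystem {α β : Type*} [PseudoEMetricSpace α] [PseudoEMetricSpace β]
    {F : α → β} {s : Set α} {K : ℝ≥0} (hF : LipschitzOnWith K F s) :
    LipschitzOnWith (max 1 K) (fun z : α × α => (z.2, F z.1)) (Prod.fst ⁻¹' s) := by
  have hFfst : LipschitzOnWith (K * 1) (F ∘ Prod.fst) (Prod.fst ⁻¹' s : Set (α × α)) :=
    hF.comp LipschitzWith.prod_fst.lipschitzOnWith (mapsTo_preimage _ _)
  rw [mul_one] at hFfst
  exact LipschitzWith.prod_snd.lipschitzOnWith.prodMk hFfst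

section SecondOrder

variable {E : Type*} [NormedAddCommGroup E] [NormedSpace ℝ E]
  {f : ℝ → E → E} {g : E → E} {c x v y w : ℝ → E} {a b : ℝ}

/-- The second-order equation `x'' = f(t, x)` holds on `[a, b]`, with velocity `v = x'`. The
derivatives are one-sided at the endpoints. -/
structure IsSecondOrderSolutionOn (f : ℝ → E → E) (x v : ℝ → E) (a b : ℝ) : Prop where
  hasDerivWithinAt_pos : ∀ t ∈ Icc a b, HasDerivWithinAt x (v t) (Icc a b) t
  hasDerivWithinAt_vel : ∀ t ∈ Icc a b, HasDerivWithinAt v (f t (x t)) (Icc a b) t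

namespace IsSecondOrderSolutionOn

lemma continuousOn_pos (hx : IsSecondOrderSolutionOn f x v a b) : ContinuousOn x (Icc a b) :=
  HasDerivWithinAt.continuousOn hx.hasDerivWithinAt_pos

lemma continuousOn_vel (hx : IsSecondOrderSolutionOn f x v a b) : ContinuousOn v (Icc a b) :=
  HasDerivWithinAt.continuousOn hx.hasDerivWithinAt_vel

lemma hasDerivWithinAt_Ici_prodMk (hx : IsSecondOrderSolutionOn f x v a b) {t : ℝ}
    (ht : t ∈ Ico a b) :
    HasDerivWithinAt (fun t => (x t, v t)) (v t, f t (x t)) (Ici t) t := by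
  have ht' : t ∈ Icc a b := Ico_subset_Icc_self ht
  exact ((hx.hasDerivWithinAt_pos t ht').prodMk
    (hx.hasDerivWithinAt_vel t ht')).mono_of_mem_nhdsWithin (Icc_mem_nhdsGE_of_mem ht)

theorem eqOn_of_lipschitzOnWith {s : ℝ → Set E} {K : ℝ≥0}
    (hf : ∀ t ∈ Ico a b, LipschitzOnWith K (f t) (s t))
    (hx : IsSecondOrderSolutionOn f x v a b) (hxs : ∀ t ∈ Ico a b, x t ∈ s t)
    (hy : IsSecondOrderSolutionOn f y w a b) (hys : ∀ t ∈ Ico a b, y t ∈ s t)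
    (hpos : x a = y a) (hvel : v a = w a) :
    EqOn x y (Icc a b) ∧ EqOn v w (Icc a b) := by
  have hpair : EqOn (fun t => (x t, v t)) (fun t => (y t, w t)) (Icc a b) :=
    ODE_solution_unique_of_mem_Icc_right (v := fun t z => (z.2, f t z.1))
      (fun t ht => lipschitzOnWith_firstOrderSystem (hf t ht))
      (hx.continuousOn_pos.prodMk hx.continuousOn_vel)
      (fun _ => hx.hasDerivWithinAt_Ici_prodMk) hxs
      (hy.continuousOn_pos.prodMk hy.continuousOn_vel)
      (fun _ => hy.hasDerivWithinAt_Ici_prodMk) hys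
      (Prod.ext hpos hvel)
  exact ⟨fun t ht => congrArg Prod.fst (hpair ht), fun t ht => congrArg Prod.snd (hpair ht)⟩

theorem eqOn_of_locallyLipschitz_sub (hg : LocallyLipschitz g) (hc : ContinuousOn c (Icc a b))
    (hx : IsSecondOrderSolutionOn (fun t z => g (z - c t)) x v a b)
    (hy : IsSecondOrderSolutionOn (fun t z => g (z - c t)) y w a b)
    (hpos : x a = y a) (hvel : v a = w a) :
    EqOn x y (Icc a b) ∧ EqOn v w (Icc a b) := by
  let S : Set E := (fun t => x t - c t) '' Icc a b ∪ (fun t => y t - c t) '' Icc a b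
  have hS : IsCompact S :=
    (isCompact_Icc.image_of_continuousOn (hx.continuousOn_pos.sub hc)).union
      (isCompact_Icc.image_of_continuousOn (hy.continuousOn_pos.sub hc))
  obtain ⟨K, hK⟩ := hg.locallyLipschitzOn.exists_lipschitzOnWith_of_compact hS
  have hforce (t : ℝ) : LipschitzOnWith K (fun z => g (z - c t)) ((· - c t) ⁻¹' S) := by
    rw [← mul_one K]
    exact hK.comp (IsometryEquiv.subRight (c t)).isometry.lipschitz.lipschitzOnWith
      (mapsTo_preimage _ S)
  exact eqOn_of_lipschitzOnWith (fun t _ => hforce t)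
    hx (fun t ht => .inl (mem_image_of_mem _ (Ico_subset_Icc_self ht)))
    hy (fun t ht => .inr (mem_image_of_mem _ (Ico_subset_Icc_self ht))) hpos hvel

end IsSecondOrderSolutionOn

variable [CompleteSpace E]

lemma hasDerivWithinAt_Icc_of_eq_add_integral {F f : ℝ → E} (hf : ContinuousOn f (Icc a b))
    (hF : ∀ t ∈ Icc a b, F t = F a + ∫ s in a..t, f s) {t : ℝ} (ht : t ∈ Icc a b) :
    HasDerivWithinAt F (f t) (Icc a b) t := by
  have hint : IntervalIntegrable f volume a t :=
    (hf.mono (Icc_subset_Icc_right ht.2)).intervalIntegrable_of_Icc ht.1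
  have : Fact (t ∈ Icc a b) := ⟨ht⟩
  exact ((intervalIntegral.integral_hasDerivWithinAt_right hint
    (hf.stronglyMeasurableAtFilter_nhdsWithin measurableSet_Icc t) (hf t ht)).const_add
      (F a)).congr hF (hF t ht)

lemma IsSecondOrderSolutionOn.of_eq_add_integral
    (hv : ContinuousOn v (Icc a b)) (hf : ContinuousOn (fun t => f t (x t)) (Icc a b))
    (hx_eq : ∀ t ∈ Icc a b, x t = x a + ∫ s in a..t, v s)
    (hv_eq : ∀ t ∈ Icc a b, v t = v a + ∫ s in a..t, f s (x s)) :
    IsSecondOrderSolutionOn f x v a b where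
  hasDerivWithinAt_pos _ := hasDerivWithinAt_Icc_of_eq_add_integral hv hx_eq
  hasDerivWithinAt_vel _ := hasDerivWithinAt_Icc_of_eq_add_integral hf hv_eq

theorem nonperiodic_trimer_invariant_plane_general {b : E} {θ : ℝ} {h : E → E}
    (hh : LocallyLipschitz h) (hodd : Function.Odd h) {q₁ q₂ q₃ p₁ p₃ : ℝ → E}
    (hcq₁ : ContinuousOn q₁ (Icc 0 θ)) (hcq₂ : ContinuousOn q₂ (Icc 0 θ))
    (hcq₃ : ContinuousOn q₃ (Icc 0 θ))
    (hcp₁ : ContinuousOn p₁ (Icc 0 θ)) (hcp₃ : ContinuousOn p₃ (Icc 0 θ))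
    (hq₁ : ∀ t ∈ Icc 0 θ, q₁ t = q₁ 0 + ∫ s in 0..t, p₁ s)
    (hq₃ : ∀ t ∈ Icc 0 θ, q₃ t = q₃ 0 + ∫ s in 0..t, p₃ s)
    (hp₁ : ∀ t ∈ Icc 0 θ, p₁ t = p₁ 0 + ∫ s in 0..t, -h (q₁ s - q₂ s - b))
    (hp₃ : ∀ t ∈ Icc 0 θ, p₃ t = p₃ 0 + ∫ s in 0..t, h (q₂ s - q₃ s - b))
    (hinitq : q₃ 0 - q₁ 0 = -((2 : ℝ) • b)) (hinitp : p₃ 0 = p₁ 0) :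
    ∀ t ∈ Icc 0 θ, q₃ t - q₁ t = -((2 : ℝ) • b) ∧ p₃ t = p₁ t := by
  have hforce₁ (s : ℝ) : -h (q₁ s - q₂ s - b) = h (b - (q₁ s - q₂ s)) := by
    rw [← hodd, neg_sub]
  have hforce₃ (s : ℝ) : h (q₂ s - q₃ s - b) = h (b - (q₃ s + (2 : ℝ) • b - q₂ s)) := by
    congr 1; module
  simp only [hforce₁] at hp₁
  simp only [hforce₃] at hp₃
  have hplane (t : ℝ) : q₃ t - q₁ t = -((2 : ℝ) • b) ↔ q₃ t + (2 : ℝ) • b = q₁ t := by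
    rw [sub_eq_iff_eq_add', ← sub_eq_add_neg, eq_sub_iff_add_eq]
  have hg : LocallyLipschitz fun z => h (b - z) :=
    hh.comp (IsometryEquiv.subLeft b).isometry.lipschitz.locallyLipschitz
  have hcx₃ : ContinuousOn (fun t => q₃ t + (2 : ℝ) • b) (Icc 0 θ) := hcq₃.add continuousOn_const
  obtain ⟨hpos, hvel⟩ := IsSecondOrderSolutionOn.eqOn_of_locallyLipschitz_sub hg hcq₂
    (.of_eq_add_integral hcp₃ (hg.continuous.comp_continuousOn (hcx₃.sub hcq₂))
      (fun t ht => by rw [hq₃ t ht, add_right_comm]) hp₃)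
    (.of_eq_add_integral hcp₁ (hg.continuous.comp_continuousOn (hcq₁.sub hcq₂)) hq₁ hp₁)
    ((hplane 0).1 hinitq) hinitp
  exact fun t ht => ⟨(hplane t).2 (hpos ht), hvel ht⟩

end SecondOrder

/-- Low-dimensional invariant plane for the nonperiodic trimer forced at the
middle particle. With `φ(t) = h(t−b)`, `h` odd, the plane
`Π'_b : {q₃ − q₁ = −2b, p₃ − p₁ = 0}` is invariant for the controlled trimer. -/
theorem nonperiodic_trimer_invariant_plane (b θ : ℝ) (hθ : 0 < θ)
    (h : ℝ → ℝ) (hh : ContDiff ℝ 1 h) (hodd : ∀ t : ℝ, h (-t) = - h t)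
    (φ : ℝ → ℝ) (hφ : φ = fun t => h (t - b))
    (u : ℝ → ℝ) (hu : Measurable u)
    (hub : ∃ C : ℝ, ∀ᵐ t : ℝ ∂volume, t ∈ Set.Icc (0:ℝ) θ → |u t| ≤ C)
    (q₁ q₂ q₃ p₁ p₂ p₃ : ℝ → ℝ)
    (hcq : ContinuousOn q₁ (Set.Icc 0 θ) ∧ ContinuousOn q₂ (Set.Icc 0 θ) ∧
      ContinuousOn q₃ (Set.Icc 0 θ))
    (hcp : ContinuousOn p₁ (Set.Icc 0 θ) ∧ ContinuousOn p₂ (Set.Icc 0 θ) ∧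
      ContinuousOn p₃ (Set.Icc 0 θ))
    (hq₁ : ∀ t ∈ Set.Icc (0:ℝ) θ, q₁ t = q₁ 0 + ∫ s in (0:ℝ)..t, p₁ s)
    (hq₂ : ∀ t ∈ Set.Icc (0:ℝ) θ, q₂ t = q₂ 0 + ∫ s in (0:ℝ)..t, p₂ s)
    (hq₃ : ∀ t ∈ Set.Icc (0:ℝ) θ, q₃ t = q₃ 0 + ∫ s in (0:ℝ)..t, p₃ s)
    (hp₁ : ∀ t ∈ Set.Icc (0:ℝ) θ, p₁ t = p₁ 0 +
      ∫ s in (0:ℝ)..t, (- φ (q₁ s - q₂ s)))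
    (hp₂ : ∀ t ∈ Set.Icc (0:ℝ) θ, p₂ t = p₂ 0 +
      ∫ s in (0:ℝ)..t, (φ (q₁ s - q₂ s) - φ (q₂ s - q₃ s) + u s))
    (hp₃ : ∀ t ∈ Set.Icc (0:ℝ) θ, p₃ t = p₃ 0 +
      ∫ s in (0:ℝ)..t, φ (q₂ s - q₃ s))
    (hinitq : q₃ 0 - q₁ 0 = -(2 * b)) (hinitp : p₃ 0 = p₁ 0) :
    ∀ t ∈ Set.Icc (0:ℝ) θ, q₃ t - q₁ t = -(2 * b) ∧ p₃ t = p₁ t := by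
  subst hφ
  exact nonperiodic_trimer_invariant_plane_general hh.locallyLipschitz hodd hcq.1 hcq.2.1 hcq.2.2
    hcp.1 hcp.2.2 hq₁ hq₃ hp₁ hp₃ hinitq hinitp
end
end
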